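/- Let k be a positive integer, N a positive integer, and ν a positive integer with ν > Nk/6. Then any Jacobi form of weight k and index Nν that vanishes to order at least ν (in q) is identically zero; that is, J_{k,Nν}(ν) = {0}. -/

import Mathlib

open Complex

/-- A Jacobi form of weight `k` and index `m`: a function on `ℍ × ℂ` with the
Jacobi transformation laws, given by an absolutely convergent Fourier expansion
`φ(τ,z) = Σ c(n,r) e(nτ + rz)` supported on `4mn − r² ≥ 0`. -/
structure JacobiForm (k m : ℕ) where
  toFun : ℂ → ℂ → ℂ
  coeff : ℕ → ℤ → ℂ
  modular : ∀ γ : Matrix.SpecialLinearGroup (Fin 2) ℤ, ∀ τ z : ℂ, 0 < τ.im →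
    toFun ((γ.1 0 0 * τ + γ.1 0 1) / (γ.1 1 0 * τ + γ.1 1 1))
        (z / (γ.1 1 0 * τ + γ.1 1 1)) =
      (γ.1 1 0 * τ + γ.1 1 1) ^ k *
        Complex.exp (2 * Real.pi * I * m * γ.1 1 0 * z ^ 2 / (γ.1 1 0 * τ + γ.1 1 1)) *
        toFun τ z
  elliptic : ∀ (lam mu : ℤ) (τ z : ℂ), 0 < τ.im →
    toFun τ (z + lam * τ + mu) =
      Complex.exp (-(2 * Real.pi * I * m) * ((lam : ℂ) ^ 2 * τ + 2 * lam * z)) * toFun τ z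
  fourier : ∀ τ z : ℂ, 0 < τ.im →
    HasSum (fun p : ℕ × ℤ =>
      coeff p.1 p.2 * Complex.exp (2 * Real.pi * I * (p.1 * τ + p.2 * z))) (toFun τ z)
  support : ∀ (n : ℕ) (r : ℤ), 4 * (m : ℤ) * n < r ^ 2 → coeff n r = 0

theorem jv_coe_smul (γ : Matrix.SpecialLinearGroup (Fin 2) ℤ) (z : UpperHalfPlane) :
    ((γ • z : UpperHalfPlane) : ℂ) =
      (γ.1 0 0 * (z : ℂ) + γ.1 0 1) / (γ.1 1 0 * (z : ℂ) + γ.1 1 1) := by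
  rw [UpperHalfPlane.coe_specialLinearGroup_apply]
  simp

theorem jv_disc_smul (γ : Matrix.SpecialLinearGroup (Fin 2) ℤ) (z : UpperHalfPlane) :
    ModularForm.discriminant (γ • z) =
      (γ.1 1 0 * (z : ℂ) + γ.1 1 1) ^ 12 * ModularForm.discriminant z := by
  have h := SlashInvariantForm.slash_action_eqn'' CuspForm.discriminant
    (γ := (γ : GL (Fin 2) ℝ)) (by exact ⟨γ, rfl⟩) z
  have h2 : UpperHalfPlane.denom (γ : GL (Fin 2) ℝ) z = (γ.1 1 0 * (z : ℂ) + γ.1 1 1) := by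
    simp [UpperHalfPlane.denom]
  rw [h2] at h
  exact_mod_cast h

theorem jv_valence (P : ℂ → ℂ) (K : ℕ) (C d : ℝ)
    (hP : DifferentiableOn ℂ P {τ : ℂ | 0 < τ.im})
    (hmod : ∀ γ : Matrix.SpecialLinearGroup (Fin 2) ℤ, ∀ τ : ℂ, 0 < τ.im →
      ‖P ((γ.1 0 0 * τ + γ.1 0 1) / (γ.1 1 0 * τ + γ.1 1 1))‖ =
        ‖(γ.1 1 0 * τ + γ.1 1 1 : ℂ)‖ ^ K * ‖P τ‖)
    (hdecay : ∀ τ : ℂ, 1 ≤ τ.im → ‖P τ‖ ≤ C * Real.exp (-(2 * Real.pi * d) * τ.im))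
    (hd : (K : ℝ) < 12 * d) :
    ∀ τ : ℂ, 0 < τ.im → P τ = 0 := by
  intro τ₀ hτ₀
  by_contra hne
  set Q : ℂ → ℂ := fun τ => P τ ^ 12 / (ModularForm.eta τ ^ 24) ^ K with hQ
  have hQd : DifferentiableOn ℂ Q {τ : ℂ | 0 < τ.im} := by
    refine DifferentiableOn.div (hP.pow 12) ?_ ?_
    · refine DifferentiableOn.pow (DifferentiableOn.pow ?_ 24) K
      intro x hx
      exact (ModularForm.differentiableAt_eta_of_mem_upperHalfPlaneSet hx).differentiableWithinAt
    · intro x hx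
      exact pow_ne_zero _ (pow_ne_zero _ (ModularForm.eta_ne_zero hx))
  have hQz : ∀ z : UpperHalfPlane, Q z = P z ^ 12 / (ModularForm.discriminant z) ^ K := by
    intro z; rfl
  have hinv : ∀ (γ : Matrix.SpecialLinearGroup (Fin 2) ℤ) (z : UpperHalfPlane),
      ‖Q (γ • z : UpperHalfPlane)‖ = ‖Q z‖ := by
    intro γ z
    have hden : (γ.1 1 0 * (z : ℂ) + γ.1 1 1) ≠ 0 := by
      have := UpperHalfPlane.denom_ne_zero (γ : GL (Fin 2) ℝ) z
      simpa [UpperHalfPlane.denom] using this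
    rw [hQz, hQz, jv_disc_smul, norm_div, norm_div, norm_pow, norm_pow, norm_pow, norm_pow,
      norm_mul, norm_pow, jv_coe_smul, hmod γ z z.2]
    have h1 : ‖(γ.1 1 0 * (z : ℂ) + γ.1 1 1)‖ ≠ 0 := norm_ne_zero_iff.2 hden
    have h2 : ‖ModularForm.discriminant z‖ ≠ 0 :=
      norm_ne_zero_iff.2 (ModularForm.discriminant_ne_zero z)
    rw [mul_pow, mul_pow, ← pow_mul, ← pow_mul, mul_comm K 12]
    exact mul_div_mul_left _ _ (pow_ne_zero _ h1)
  -- decay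
  have hsmall : ∀ ε : ℝ, 0 < ε → ∃ A : ℝ, ∀ z : UpperHalfPlane, A ≤ z.im → ‖Q z‖ < ε := by
    intro ε hε
    obtain ⟨c, hc, hbd⟩ := ModularForm.exp_isBigO_discriminant.exists_pos
    rw [Asymptotics.isBigOWith_iff] at hbd
    obtain ⟨A₁, hA₁⟩ := (UpperHalfPlane.atImInfty_mem _).1 hbd
    have hlim : Filter.Tendsto (fun v : ℝ => C ^ 12 * c ^ K *
        Real.exp (-(2 * Real.pi * (12 * d - K)) * v)) Filter.atTop (nhds 0) := by
      have : Filter.Tendsto (fun v : ℝ => Real.exp (-(2 * Real.pi * (12 * d - K)) * v))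
          Filter.atTop (nhds 0) := by
        refine Real.tendsto_exp_atBot.comp ?_
        refine Filter.Tendsto.const_mul_atTop_of_neg ?_ Filter.tendsto_id
        have : 0 < 2 * Real.pi * (12 * d - K) :=
          mul_pos (by positivity) (by linarith)
        linarith
      simpa using this.const_mul (C ^ 12 * c ^ K)
    obtain ⟨A₂, hA₂⟩ := Filter.eventually_atTop.1 (hlim.eventually (gt_mem_nhds hε))
    refine ⟨max (max A₁ A₂) 1, fun z hz => ?_⟩
    have hz1 : A₁ ≤ z.im := le_trans (le_trans (le_max_left _ _) (le_max_left _ _)) hz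
    have hz2 : A₂ ≤ z.im := le_trans (le_trans (le_max_right _ _) (le_max_left _ _)) hz
    have hz3 : 1 ≤ z.im := le_trans (le_max_right _ _) hz
    refine lt_of_le_of_lt ?_ (hA₂ _ hz2)
    have e1 := hdecay z hz3
    have e2 : Real.exp (-2 * Real.pi * z.im) ≤ c * ‖ModularForm.discriminant z‖ := by
      have := hA₁ z hz1
      simpa [Real.norm_of_nonneg (Real.exp_pos _).le] using this
    have hD : 0 < ‖ModularForm.discriminant z‖ :=
      norm_pos_iff.2 (ModularForm.discriminant_ne_zero z)
    rw [hQz, norm_div, norm_pow, norm_pow, div_le_iff₀ (by positivity)]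
    have e3 : ‖P z‖ ^ 12 ≤ (C * Real.exp (-(2 * Real.pi * d) * z.im)) ^ 12 :=
      pow_le_pow_left₀ (norm_nonneg _) e1 12
    have e4 : Real.exp (-2 * Real.pi * z.im) ^ K ≤ (c * ‖ModularForm.discriminant z‖) ^ K :=
      pow_le_pow_left₀ (Real.exp_pos _).le e2 K
    have e5 : (C * Real.exp (-(2 * Real.pi * d) * z.im)) ^ 12 =
        C ^ 12 * Real.exp (-(2 * Real.pi * (12 * d - K)) * z.im) *
          Real.exp (-2 * Real.pi * z.im) ^ K := by
      rw [mul_pow, ← Real.exp_nat_mul, ← Real.exp_nat_mul, mul_assoc (C ^ 12), ← Real.exp_add]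
      congr 2
      push_cast
      ring
    have hC : 0 ≤ C ^ 12 := by
      have : C ^ 12 = (C ^ 6) ^ 2 := by ring
      rw [this]; positivity
    calc ‖P z‖ ^ 12 ≤ _ := e3
      _ = _ := e5
      _ ≤ C ^ 12 * Real.exp (-(2 * Real.pi * (12 * d - K)) * z.im) *
          (c * ‖ModularForm.discriminant z‖) ^ K :=
          mul_le_mul_of_nonneg_left e4 (by positivity)
      _ = _ := by rw [mul_pow]; ring
  set z₀ : UpperHalfPlane := ⟨τ₀, hτ₀⟩ with hz₀
  have hε : 0 < ‖Q z₀‖ := by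
    rw [norm_pos_iff, hQz]
    exact div_ne_zero (pow_ne_zero _ hne) (pow_ne_zero _ (ModularForm.discriminant_ne_zero _))
  obtain ⟨A, hA⟩ := hsmall _ hε
  set S : Set ℂ := Set.Icc (-(1 / 2) : ℝ) (1 / 2) ×ℂ Set.Icc (1 / 2 : ℝ) A with hS
  have hScomp : IsCompact S := isCompact_Icc.reProdIm isCompact_Icc
  have hSsub : S ⊆ {τ : ℂ | 0 < τ.im} := by
    intro x hx
    have := (Complex.mem_reProdIm.1 hx).2.1
    change 0 < x.im
    linarith
  have hfd : ∀ z : UpperHalfPlane, ‖Q z‖ < ‖Q z₀‖ ∨ ∃ w ∈ S, ‖Q w‖ = ‖Q z‖ := by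
    intro z
    obtain ⟨g, hg⟩ := ModularGroup.exists_smul_mem_fd z
    by_cases hAz : A ≤ (g • z).im
    · left
      rw [← hinv g z]
      exact hA _ hAz
    · right
      refine ⟨(g • z : UpperHalfPlane), ?_, hinv g z⟩
      have h3 := ModularGroup.three_le_four_mul_im_sq_of_mem_fd hg
      have hp := (g • z).im_pos
      have habs := abs_le.1 hg.2
      refine Complex.mem_reProdIm.2 ⟨⟨by simpa using habs.1, by simpa using habs.2⟩, ?_, ?_⟩
      · have : 1 / 2 ≤ (g • z).im := by nlinarith
        exact this
      · exact (not_le.1 hAz).le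
  have hSne : S.Nonempty := by
    rcases hfd z₀ with h | ⟨w, hw, -⟩
    · exact absurd h (lt_irrefl _)
    · exact ⟨w, hw⟩
  obtain ⟨c, hcS, hcmax⟩ := hScomp.exists_isMaxOn hSne
    ((hQd.continuousOn.mono hSsub).norm)
  have hcz : ‖Q z₀‖ ≤ ‖Q c‖ := by
    rcases hfd z₀ with h | ⟨w, hw, hw2⟩
    · exact absurd h (lt_irrefl _)
    · rw [← hw2]; exact hcmax hw
  have hmax : IsMaxOn (norm ∘ Q) {τ : ℂ | 0 < τ.im} c := by
    intro x hx
    rcases hfd ⟨x, hx⟩ with h | ⟨w, hw, hw2⟩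
    · exact h.le.trans hcz
    · have : ‖Q w‖ ≤ ‖Q c‖ := hcmax hw
      rw [hw2] at this
      exact this
  have hconst := Complex.eqOn_of_isPreconnected_of_isMaxOn_norm
    (Convex.isPreconnected (convex_halfSpace_im_gt 0))
    (isOpen_lt continuous_const Complex.continuous_im) hQd (hSsub hcS) hmax
  have hbigim : 0 < max A 1 := lt_of_lt_of_le one_pos (le_max_right _ _)
  have h1 := hA ⟨(max A 1 : ℝ) * Complex.I, by simpa using hbigim⟩ (by simp [UpperHalfPlane.im])
  have h2 : Q ((max A 1 : ℝ) * Complex.I) = Q c := hconst (by simpa using hbigim)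
  have h3 : ‖Q ((max A 1 : ℝ) * Complex.I)‖ < ‖Q z₀‖ := h1
  rw [h2] at h3
  linarith

theorem jv_norm_e (n r : ℝ) (τ z : ℂ) :
    ‖Complex.exp (2 * Real.pi * I * (n * τ + r * z))‖ =
      Real.exp (-(2 * Real.pi) * (n * τ.im + r * z.im)) := by
  rw [Complex.norm_exp]
  congr 1
  simp

theorem jv_summable {k m : ℕ} (φ : JacobiForm k m) (v y : ℝ) (hv : 0 < v) :
    Summable (fun p : ℕ × ℤ => ‖φ.coeff p.1 p.2‖ *
      Real.exp (-(2 * Real.pi) * (p.1 * v + p.2 * y))) := by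
  have h := (φ.fourier (v * I) (y * I) (by simpa using hv)).summable.norm
  refine h.congr fun p => ?_
  have := jv_norm_e p.1 p.2 (v * I) (y * I)
  simp only [Complex.ofReal_natCast, Complex.ofReal_intCast] at this
  rw [norm_mul, this]
  simp

theorem jv_differentiableAt {k m : ℕ} (φ : JacobiForm k m) (g h : ℂ → ℂ)
    (hg : Differentiable ℂ g) (hh : Differentiable ℂ h) (w₀ : ℂ) (hw : 0 < (g w₀).im) :
    DifferentiableAt ℂ (fun w => φ.toFun (g w) (h w)) w₀ := by
  set v := (g w₀).im / 2 with hv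
  set Y := |(h w₀).im| + 1 with hY
  have hv0 : 0 < v := by positivity
  set U : Set ℂ := {w | v < (g w).im ∧ |(h w).im| < Y} with hU
  have hUo : IsOpen U := by
    refine IsOpen.inter (isOpen_lt continuous_const (Complex.continuous_im.comp hg.continuous))
      (isOpen_lt (Complex.continuous_im.comp hh.continuous).abs continuous_const)
  have hw0 : w₀ ∈ U := ⟨by rw [hv]; linarith, by rw [hY]; linarith⟩
  have hsum : Summable (fun p : ℕ × ℤ => ‖φ.coeff p.1 p.2‖ *
      Real.exp (-(2 * Real.pi) * (p.1 * v + p.2 * Y)) + ‖φ.coeff p.1 p.2‖ *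
      Real.exp (-(2 * Real.pi) * (p.1 * v + p.2 * (-Y)))) :=
    (jv_summable φ v Y hv0).add (jv_summable φ v (-Y) hv0)
  have hD : DifferentiableOn ℂ (fun w => ∑' p : ℕ × ℤ,
      φ.coeff p.1 p.2 * Complex.exp (2 * Real.pi * I * (p.1 * g w + p.2 * h w))) U := by
    refine Complex.differentiableOn_tsum_of_summable_norm hsum ?_ hUo ?_
    · intro p
      apply Differentiable.differentiableOn
      fun_prop
    · intro p w hw
      have e := jv_norm_e p.1 p.2 (g w) (h w)
      simp only [Complex.ofReal_natCast, Complex.ofReal_intCast] at e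
      rw [norm_mul, e, ← mul_add]
      refine mul_le_mul_of_nonneg_left ?_ (norm_nonneg _)
      have h1 : (p.1 : ℝ) * v ≤ p.1 * (g w).im :=
        mul_le_mul_of_nonneg_left hw.1.le (Nat.cast_nonneg _)
      have h2 := abs_lt.1 hw.2
      rcases le_total 0 (p.2 : ℝ) with hp | hp
      · refine le_trans (Real.exp_le_exp.2 ?_) (le_add_of_nonneg_left (Real.exp_pos _).le)
        have : (p.2 : ℝ) * (-Y) ≤ p.2 * (h w).im := mul_le_mul_of_nonneg_left h2.1.le hp
        have : (p.1 : ℝ) * v + p.2 * (-Y) ≤ p.1 * (g w).im + p.2 * (h w).im := by linarith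
        nlinarith [Real.pi_pos]
      · refine le_trans (Real.exp_le_exp.2 ?_) (le_add_of_nonneg_right (Real.exp_pos _).le)
        have : (p.2 : ℝ) * Y ≤ p.2 * (h w).im := mul_le_mul_of_nonpos_left h2.2.le hp
        have : (p.1 : ℝ) * v + p.2 * Y ≤ p.1 * (g w).im + p.2 * (h w).im := by linarith
        nlinarith [Real.pi_pos]
  have hD2 : DifferentiableOn ℂ (fun w => φ.toFun (g w) (h w)) U := by
    refine hD.congr fun w hw => ?_
    exact (φ.fourier (g w) (h w) (hv0.trans hw.1)).tsum_eq.symm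
  exact hD2.differentiableAt (hUo.mem_nhds hw0)

/-- The restriction of a Jacobi form to the torsion-type section `lam * τ + mu`. -/
noncomputable def jvF {k m : ℕ} (φ : JacobiForm k m) (lam mu : ℝ) (τ : ℂ) : ℂ :=
  Complex.exp (2 * Real.pi * I * (m * (lam ^ 2 * τ + lam * mu))) * φ.toFun τ (lam * τ + mu)

theorem jvF_differentiableOn {k m : ℕ} (φ : JacobiForm k m) (lam mu : ℝ) :
    DifferentiableOn ℂ (jvF φ lam mu) {τ : ℂ | 0 < τ.im} := by
  intro τ hτ
  apply DifferentiableAt.differentiableWithinAt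
  unfold jvF
  refine DifferentiableAt.mul (by fun_prop) ?_
  exact jv_differentiableAt φ (fun w => w) (fun w => lam * w + mu) (by fun_prop) (by fun_prop) τ hτ

theorem jvF_bound {k m : ℕ} (φ : JacobiForm k m) (lam mu o : ℝ)
    (ho : ∀ (n : ℕ) (r : ℤ), φ.coeff n r ≠ 0 → o ≤ n + r * lam + m * lam ^ 2) :
    ∃ C : ℝ, 0 ≤ C ∧ ∀ τ : ℂ, 1 ≤ τ.im →
      ‖jvF φ lam mu τ‖ ≤ C * Real.exp (-(2 * Real.pi * o) * τ.im) := by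
  have hs := jv_summable φ 1 lam one_pos
  set D : ℝ := ∑' p : ℕ × ℤ, ‖φ.coeff p.1 p.2‖ *
      Real.exp (-(2 * Real.pi) * (p.1 * 1 + p.2 * lam)) with hD
  have hD0 : 0 ≤ D := tsum_nonneg fun p => by positivity
  refine ⟨D * Real.exp (2 * Real.pi * (o - m * lam ^ 2)), by positivity, fun τ hτ => ?_⟩
  have hf := φ.fourier τ (lam * τ + mu) (by linarith)
  have hb : ‖φ.toFun τ (lam * τ + mu)‖ ≤
      D * Real.exp (-(2 * Real.pi) * ((o - m * lam ^ 2) * (τ.im - 1))) := by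
    rw [← hf.tsum_eq]
    refine tsum_of_norm_bounded (hs.hasSum.mul_right _) fun p => ?_
    by_cases hp : φ.coeff p.1 p.2 = 0
    · simp [hp]
    have e := jv_norm_e p.1 p.2 τ (lam * τ + mu)
    simp only [Complex.ofReal_natCast, Complex.ofReal_intCast] at e
    rw [norm_mul, e, mul_assoc, ← Real.exp_add]
    refine mul_le_mul_of_nonneg_left (Real.exp_le_exp.2 ?_) (norm_nonneg _)
    have h1 := ho p.1 p.2 hp
    have h2 : ((lam : ℂ) * τ + mu).im = lam * τ.im := by simp
    rw [h2]
    have h3 : 0 ≤ (p.1 + p.2 * lam + m * lam ^ 2 - o) * (τ.im - 1) :=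
      mul_nonneg (by linarith) (by linarith)
    have h4 : 0 ≤ 2 * Real.pi * ((p.1 + p.2 * lam + m * lam ^ 2 - o) * (τ.im - 1)) :=
      mul_nonneg (by positivity) h3
    linarith
  unfold jvF
  rw [norm_mul]
  have hn : ‖Complex.exp (2 * Real.pi * I * (m * (lam ^ 2 * τ + lam * mu)))‖ =
      Real.exp (-(2 * Real.pi) * (m * lam ^ 2 * τ.im)) := by
    rw [Complex.norm_exp]
    congr 1
    simp [pow_two]
    ring
  rw [hn]
  calc _ ≤ Real.exp (-(2 * Real.pi) * (m * lam ^ 2 * τ.im)) *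
        (D * Real.exp (-(2 * Real.pi) * ((o - m * lam ^ 2) * (τ.im - 1)))) :=
        mul_le_mul_of_nonneg_left hb (Real.exp_pos _).le
    _ = D * (Real.exp (-(2 * Real.pi) * (m * lam ^ 2 * τ.im)) *
        Real.exp (-(2 * Real.pi) * ((o - m * lam ^ 2) * (τ.im - 1)))) := by ring
    _ = _ := by
        rw [← Real.exp_add, mul_assoc D, ← Real.exp_add]
        congr 2
        ring

theorem jvF_modular {k m : ℕ} (φ : JacobiForm k m) (lam mu : ℝ)
    (γ : Matrix.SpecialLinearGroup (Fin 2) ℤ) (τ : ℂ) (hτ : 0 < τ.im) :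
    jvF φ lam mu ((γ.1 0 0 * τ + γ.1 0 1) / (γ.1 1 0 * τ + γ.1 1 1)) =
      (γ.1 1 0 * τ + γ.1 1 1) ^ k *
        jvF φ (lam * γ.1 0 0 + mu * γ.1 1 0) (lam * γ.1 0 1 + mu * γ.1 1 1) τ := by
  have hden : (γ.1 1 0 * τ + γ.1 1 1) ≠ 0 := by
    have := UpperHalfPlane.denom_ne_zero (γ : GL (Fin 2) ℝ) ⟨τ, hτ⟩
    simpa [UpperHalfPlane.denom] using this
  have hdet : (γ.1 0 0 : ℂ) * γ.1 1 1 - γ.1 0 1 * γ.1 1 0 = 1 := by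
    have := γ.2
    rw [Matrix.det_fin_two] at this
    exact_mod_cast this
  have hm := φ.modular γ τ (((lam * γ.1 0 0 + mu * γ.1 1 0 : ℝ) : ℂ) * τ +
    ((lam * γ.1 0 1 + mu * γ.1 1 1 : ℝ) : ℂ)) hτ
  have hz : (((lam * γ.1 0 0 + mu * γ.1 1 0 : ℝ) : ℂ) * τ +
      ((lam * γ.1 0 1 + mu * γ.1 1 1 : ℝ) : ℂ)) / (γ.1 1 0 * τ + γ.1 1 1) =
      lam * ((γ.1 0 0 * τ + γ.1 0 1) / (γ.1 1 0 * τ + γ.1 1 1)) + mu := by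
    push_cast
    field_simp
    ring
  rw [hz] at hm
  unfold jvF
  rw [hm]
  rw [show ∀ x y w u : ℂ, x * (y * w * u) = y * ((x * w) * u) by intros; ring,
    ← Complex.exp_add]
  congr 3
  push_cast
  generalize (γ.1 0 0 : ℂ) = a at *
  generalize (γ.1 0 1 : ℂ) = b at *
  generalize (γ.1 1 0 : ℂ) = c at *
  generalize (γ.1 1 1 : ℂ) = d at *
  have key : (lam : ℂ) ^ 2 * ((a * τ + b) / (c * τ + d)) + lam * mu +
      c * ((lam * a + mu * c) * τ + (lam * b + mu * d)) ^ 2 / (c * τ + d) =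
      (lam * a + mu * c) ^ 2 * τ + (lam * a + mu * c) * (lam * b + mu * d) := by
    apply mul_right_cancel₀ hden
    rw [show ∀ x p y q w : ℂ, w ≠ 0 → (x * (p / w) + y + q / w) * w = x * p + y * w + q by
      intro x p y q w hw
      field_simp]
    swap
    · exact hden
    linear_combination (-(lam : ℂ) ^ 2 * (a * τ + b) - lam * mu * (c * τ + d)) * hdet
  rw [← key]
  ring

theorem jvF_periodic {k m : ℕ} (φ : JacobiForm k m) (lam mu : ℝ) (l j : ℤ)
    (τ : ℂ) (hτ : 0 < τ.im) :
    ‖jvF φ (lam + l) (mu + j) τ‖ = ‖jvF φ lam mu τ‖ := by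
  unfold jvF
  have h := φ.elliptic l j τ (lam * τ + mu) hτ
  have e : ((lam + l : ℝ) : ℂ) * τ + ((mu + j : ℝ) : ℂ) = (lam * τ + mu) + l * τ + j := by
    push_cast; ring
  rw [e, h, ← mul_assoc, ← Complex.exp_add, norm_mul, norm_mul]
  congr 1
  rw [Complex.norm_exp, Complex.norm_exp]
  congr 1
  simp [pow_two]
  ring

theorem jv_hasSum_congr {ι : Type*} {f g : ι → ℂ} {a : ℂ} (hf : HasSum f a)
    (h : ∀ i, g i = f i) : HasSum g a := by
  rw [show g = f from funext h]
  exact hf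

/-- Lower bound for the exponents occurring along the section with slope `lam`. -/
theorem jv_order {N ν n r lam : ℝ} (hN : 1 ≤ N) (hν : 0 < ν) (hn : ν ≤ n)
    (hsupp : r ^ 2 ≤ 4 * (N * ν) * n) (hlam : |lam| ≤ 1 / 2) :
    max (ν * (1 - 2 * N * |lam|)) 0 ≤ n + r * lam + N * ν * lam ^ 2 := by
  have hNν : 0 < N * ν := by positivity
  have hx0 : 0 ≤ |lam| := abs_nonneg _
  have h1 : -(|r| * |lam|) ≤ r * lam := by
    rw [← abs_mul]; exact neg_abs_le _
  have hl2 : lam ^ 2 = |lam| ^ 2 := (sq_abs _).symm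
  have hr2 : r ^ 2 = |r| ^ 2 := (sq_abs _).symm
  have hr0 : 0 ≤ |r| := abs_nonneg _
  rw [hr2] at hsupp
  rw [hl2]
  generalize |lam| = x at *
  generalize |r| = s at *
  have h4 : 0 ≤ 4 * (N * ν) * (n - s * x + N * ν * x ^ 2) - (s - 2 * (N * ν) * x) ^ 2 := by
    nlinarith
  refine max_le ?_ ?_
  · by_cases hs : s ≤ 2 * (N * ν)
    · have : s * x ≤ 2 * (N * ν) * x := mul_le_mul_of_nonneg_right hs hx0
      have : 0 ≤ N * ν * x ^ 2 := by positivity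
      nlinarith
    · push Not at hs
      have h5 : (2 * (N * ν) * (1 - x)) ^ 2 ≤ (s - 2 * (N * ν) * x) ^ 2 := by
        apply pow_le_pow_left₀
        · exact mul_nonneg (by positivity) (by linarith)
        · linarith
      have h6 : 4 * (N * ν) * (N * ν * (1 - x) ^ 2) ≤
          4 * (N * ν) * (n - s * x + N * ν * x ^ 2) := by nlinarith
      have h7 : N * ν * (1 - x) ^ 2 ≤ n - s * x + N * ν * x ^ 2 :=
        le_of_mul_le_mul_left h6 (by positivity)
      have h8 : ν ≤ N * ν := by nlinarith
      nlinarith [sq_nonneg x]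
  · have h6 : 0 ≤ 4 * (N * ν) * (n - s * x + N * ν * x ^ 2) := by
      nlinarith [sq_nonneg (s - 2 * (N * ν) * x)]
    have h7 : 0 ≤ n - s * x + N * ν * x ^ 2 := by
      by_contra hcon
      push Not at hcon
      nlinarith
    linarith

theorem jv_sum_Icc (A : ℕ) (c : ℝ) :
    ∑ i ∈ Finset.Icc (-(A : ℤ)) A, (1 - c * |(i : ℝ)|) = 2 * A + 1 - c * (A * (A + 1)) := by
  induction A with
  | zero => simp
  | succ A ih =>
    have : Finset.Icc (-((A + 1 : ℕ) : ℤ)) ((A + 1 : ℕ) : ℤ) =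
        insert (-((A + 1 : ℕ) : ℤ)) (insert ((A + 1 : ℕ) : ℤ) (Finset.Icc (-(A : ℤ)) A)) := by
      ext x
      simp only [Finset.mem_Icc, Finset.mem_insert]
      push_cast
      omega
    rw [this, Finset.sum_insert, Finset.sum_insert, ih]
    · have h : (0 : ℝ) ≤ A + 1 := by positivity
      push_cast
      rw [abs_neg, abs_of_nonneg h]
      ring
    · simp
    · simp; omega

theorem jv_sum_order (t N : ℕ) [NeZero t] (hN : 0 < N) (ht : 3 ≤ t) (hodd : Odd t) :
    (t : ℝ) / (2 * N) ≤
      ∑ a : ZMod t, max (1 - 2 * (N : ℝ) * |((a.valMinAbs : ℤ) : ℝ) / t|) 0 := by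
  set A : ℕ := t / (2 * N) with hA
  have ht0 : (0 : ℝ) < t := by exact_mod_cast (by omega : 0 < t)
  have hN0 : (0 : ℝ) < N := by exact_mod_cast hN
  have hA2 : 2 * A < t := by
    have h1 : A ≤ t / 2 := by
      rw [hA]
      exact Nat.div_le_div_left (by omega) (by norm_num)
    obtain ⟨s, hs⟩ := hodd
    omega
  have hinj : Set.InjOn (fun i : ℤ => (i : ZMod t)) (Finset.Icc (-(A : ℤ)) A : Set ℤ) := by
    intro i hi j hj hij
    simp only [Finset.coe_Icc, Set.mem_Icc] at hi hj
    have h1 : ((i : ZMod t)).valMinAbs = i :=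
      (ZMod.valMinAbs_spec _ _).2 ⟨rfl, by constructor <;> omega⟩
    have h2 : ((j : ZMod t)).valMinAbs = j :=
      (ZMod.valMinAbs_spec _ _).2 ⟨rfl, by constructor <;> omega⟩
    rw [← h1, ← h2]
    exact congrArg _ hij
  have hsub : ∑ a ∈ (Finset.Icc (-(A : ℤ)) A).image (fun i : ℤ => (i : ZMod t)),
      max (1 - 2 * (N : ℝ) * |((a.valMinAbs : ℤ) : ℝ) / t|) 0 ≤
      ∑ a : ZMod t, max (1 - 2 * (N : ℝ) * |((a.valMinAbs : ℤ) : ℝ) / t|) 0 :=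
    Finset.sum_le_sum_of_subset_of_nonneg (Finset.subset_univ _) fun _ _ _ => le_max_right _ _
  refine le_trans ?_ hsub
  rw [Finset.sum_image hinj]
  have hle : ∑ i ∈ Finset.Icc (-(A : ℤ)) A, (1 - (2 * N / t : ℝ) * |(i : ℝ)|) ≤
      ∑ i ∈ Finset.Icc (-(A : ℤ)) A,
        max (1 - 2 * (N : ℝ) * |(((i : ZMod t).valMinAbs : ℤ) : ℝ) / t|) 0 := by
    refine Finset.sum_le_sum fun i hi => ?_
    rw [Finset.mem_Icc] at hi
    have h1 : ((i : ZMod t)).valMinAbs = i :=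
      (ZMod.valMinAbs_spec _ _).2 ⟨rfl, by constructor <;> omega⟩
    rw [h1, abs_div, abs_of_pos ht0]
    refine le_trans (le_of_eq ?_) (le_max_left _ _)
    ring
  refine le_trans ?_ hle
  rw [jv_sum_Icc]
  have hb1 : (A : ℝ) * (2 * N) ≤ t := by
    have : A * (2 * N) ≤ t := Nat.div_mul_le_self _ _
    exact_mod_cast this
  have hb2 : (t : ℝ) ≤ (A + 1) * (2 * N) := by
    have : t < (A + 1) * (2 * N) := by
      have := Nat.lt_div_mul_add (a := t) (b := 2 * N) (by omega)
      rw [add_mul, one_mul]; exact this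
    exact_mod_cast this.le
  have hkey : 2 * (A : ℝ) + 1 - 2 * N / t * (A * (A + 1)) - t / (2 * N) =
      (t - A * (2 * N)) * ((A + 1) * (2 * N) - t) / (2 * N * t) := by
    field_simp
    ring
  have : 0 ≤ (t - (A : ℝ) * (2 * N)) * ((A + 1) * (2 * N) - t) / (2 * N * t) := by
    apply div_nonneg
    · exact mul_nonneg (by linarith) (by linarith)
    · positivity
  linarith

/-- Extraction of Fourier coefficients. -/
theorem jv_coeff_extract {ι : Type*} [Countable ι] (a : ι → ℂ) (h : ι → ℤ)
    (ha : Summable fun i => ‖a i‖)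
    (hz : ∀ x : ℝ, HasSum (fun i => a i * Complex.exp (2 * Real.pi * I * (h i * x))) 0) (j : ℤ) :
    HasSum (fun i => if h i = j then a i else 0) 0 := by
  set f : ι → C(ℝ, ℂ) := fun i =>
    ⟨fun x => a i * Complex.exp (2 * Real.pi * I * ((h i - j) * x)), by fun_prop⟩ with hf
  have hnorm : ∀ i (x : ℝ), ‖f i x‖ = ‖a i‖ := by
    intro i x
    simp only [hf, ContinuousMap.coe_mk, norm_mul, Complex.norm_exp]
    have : (2 * Real.pi * I * ((h i - j) * x) : ℂ).re = 0 := by simp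
    rw [this]; simp
  have hs : Summable fun i : ι => ‖(f i).restrict
      ((⟨Set.uIcc 0 1, isCompact_uIcc⟩ : TopologicalSpace.Compacts ℝ) : Set ℝ)‖ := by
    refine Summable.of_nonneg_of_le (fun _ => norm_nonneg _) (fun i => ?_) ha
    rw [ContinuousMap.norm_le _ (norm_nonneg _)]
    intro x
    exact (hnorm i x).le
  have hint := intervalIntegral.hasSum_intervalIntegral_of_summable_norm hs
  have hzero : ∀ x : ℝ, ∑' i, f i x = 0 := by
    intro x
    have := (hz x).mul_right (Complex.exp (-(2 * Real.pi * I * (j * x))))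
    rw [zero_mul] at this
    rw [← this.tsum_eq]
    refine tsum_congr fun i => ?_
    simp only [hf, ContinuousMap.coe_mk]
    rw [mul_assoc (a i), ← Complex.exp_add]
    ring_nf
  simp only [hzero, intervalIntegral.integral_zero] at hint
  have hfun : (fun i => if h i = j then a i else 0) = fun i => ∫ x in (0 : ℝ)..1, f i x := by
    funext i
    simp only [hf, ContinuousMap.coe_mk]
    rw [intervalIntegral.integral_const_mul]
    split_ifs with hij
    · simp [hij]
    · have hc : (2 * Real.pi * I * (h i - j) : ℂ) ≠ 0 := by
        refine mul_ne_zero Complex.two_pi_I_ne_zero ?_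
        rw [sub_ne_zero]
        exact_mod_cast hij
      have e : ∀ x : ℝ, Complex.exp (2 * Real.pi * I * ((h i - j) * x)) =
          Complex.exp ((2 * Real.pi * I * (h i - j)) * x) := by
        intro x; ring_nf
      simp only [e]
      rw [integral_exp_mul_complex hc]
      have e2 : Complex.exp (2 * Real.pi * I * (h i - j) * (1 : ℝ)) = 1 := by
        rw [Complex.exp_eq_one_iff]
        exact ⟨h i - j, by push_cast; ring⟩
      rw [e2]
      simp
  rw [hfun]
  exact hint

theorem jv_coeff_zero {k m : ℕ} (φ : JacobiForm k m)
    (hφ : ∀ τ z : ℂ, 0 < τ.im → φ.toFun τ z = 0) (n : ℕ) (r : ℤ) : φ.coeff n r = 0 := by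
  have hstep : ∀ u : ℝ, HasSum (fun n : ℕ => φ.coeff n r *
      Complex.exp (2 * Real.pi * I * (n * (u + I)))) 0 := by
    intro u
    have hs : Summable fun p : ℕ × ℤ => ‖φ.coeff p.1 p.2 *
        Complex.exp (2 * Real.pi * I * (p.1 * (u + I)))‖ := by
      have := (φ.fourier (u + I) 0 (by simp)).summable.norm
      simpa using this
    have h := jv_coeff_extract (fun p : ℕ × ℤ => φ.coeff p.1 p.2 *
      Complex.exp (2 * Real.pi * I * (p.1 * (u + I)))) (fun p => p.2) hs (fun x => by
        have := φ.fourier (u + I) x (by simp)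
        rw [hφ _ _ (by simp)] at this
        refine jv_hasSum_congr this fun p => ?_
        rw [mul_assoc, ← Complex.exp_add]
        ring_nf) r
    have hinj : Function.Injective (fun n : ℕ => (n, r)) := fun a b hab => by simpa using hab
    have h2 := (hinj.hasSum_iff (f := fun p : ℕ × ℤ => if p.2 = r then φ.coeff p.1 p.2 *
      Complex.exp (2 * Real.pi * I * (p.1 * (u + I))) else 0) (a := 0) (by
        rintro ⟨a, b⟩ hab
        have : b ≠ r := fun hb => hab ⟨a, by simp [hb]⟩
        simp [this])).2 h
    simpa [Function.comp_def] using h2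
  have hs : Summable fun n : ℕ => ‖φ.coeff n r * Complex.exp (2 * Real.pi * I * (n * I))‖ := by
    have := (hstep 0).summable.norm
    simpa using this
  have h := jv_coeff_extract (fun n : ℕ => φ.coeff n r *
    Complex.exp (2 * Real.pi * I * (n * I))) (fun n => (n : ℤ)) hs (fun x => by
      refine jv_hasSum_congr (hstep x) fun p => ?_
      rw [mul_assoc, ← Complex.exp_add]
      push_cast
      ring_nf) n
  have h3 : HasSum (fun i : ℕ => if (i : ℤ) = n then φ.coeff i r *
      Complex.exp (2 * Real.pi * I * (i * I)) else 0)
      (φ.coeff n r * Complex.exp (2 * Real.pi * I * (n * I))) := by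
    have := hasSum_single (f := fun i : ℕ => if (i : ℤ) = n then φ.coeff i r *
      Complex.exp (2 * Real.pi * I * (i * I)) else 0) n (fun b hb => by simp [hb])
    simpa using this
  have h4 := h3.unique h
  exact (mul_eq_zero.1 h4).resolve_right (Complex.exp_ne_zero _)

theorem jv_prod_zero {ι : Type*} (s : Finset ι) (f : ι → ℂ → ℂ) (U : Set ℂ) (hU : IsOpen U)
    (hc : IsPreconnected U) (hne : U.Nonempty) (hf : ∀ i, DifferentiableOn ℂ (f i) U)
    (h : ∀ τ ∈ U, ∏ i ∈ s, f i τ = 0) : ∃ i ∈ s, ∀ τ ∈ U, f i τ = 0 := by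
  classical
  induction s using Finset.induction_on with
  | empty =>
    obtain ⟨τ, hτ⟩ := hne
    simpa using h τ hτ
  | insert a s ha ih =>
    have hp : DifferentiableOn ℂ (fun τ => ∏ i ∈ s, f i τ) U :=
      DifferentiableOn.fun_finsetProd fun i _ => hf i
    rcases AnalyticOnNhd.eq_zero_or_eq_zero_of_mul_eq_zero ((hf a).analyticOnNhd hU)
      (hp.analyticOnNhd hU) (fun τ hτ => by
        have := h τ hτ
        rwa [Finset.prod_insert ha] at this) hc with h1 | h1
    · exact ⟨a, Finset.mem_insert_self _ _, h1⟩
    · obtain ⟨i, hi, hi2⟩ := ih h1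
      exact ⟨i, Finset.mem_insert_of_mem hi, hi2⟩

theorem jvF_congr {k m : ℕ} (φ : JacobiForm k m) (t : ℕ) [NeZero t] (p q p' q' : ℤ)
    (hp : (p : ZMod t) = p') (hq : (q : ZMod t) = q') (τ : ℂ) (hτ : 0 < τ.im) :
    ‖jvF φ ((p : ℝ) / t) ((q : ℝ) / t) τ‖ = ‖jvF φ ((p' : ℝ) / t) ((q' : ℝ) / t) τ‖ := by
  have ht : (t : ℝ) ≠ 0 := by exact_mod_cast NeZero.ne t
  rw [ZMod.intCast_eq_intCast_iff_dvd_sub] at hp hq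
  obtain ⟨l, hl⟩ := hp
  obtain ⟨j, hj⟩ := hq
  have e1 : (p' : ℝ) / t = (p : ℝ) / t + l := by
    have : p' = p + t * l := by linarith
    rw [this]; push_cast; field_simp
  have e2 : (q' : ℝ) / t = (q : ℝ) / t + j := by
    have : q' = q + t * j := by linarith
    rw [this]; push_cast; field_simp
  rw [e1, e2, jvF_periodic φ _ _ l j τ hτ]

theorem jv_torsion (k N ν : ℕ) (hN : 0 < N) (hν : 0 < ν) (hbig : N * k < 6 * ν)
    (φ : JacobiForm k (N * ν))
    (horder : ∀ (n : ℕ) (r : ℤ), n < ν → φ.coeff n r = 0)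
    (t : ℕ) (ht3 : 3 ≤ t) (hodd : Odd t) (htbig : 12 * N * ν < t ^ 2) :
    ∃ g : ℕ, 1 ≤ g ∧ g < t ∧ ∀ τ : ℂ, 0 < τ.im → φ.toFun τ (((g : ℝ) / t : ℝ) : ℂ) = 0 := by
  haveI : NeZero t := ⟨by omega⟩
  have ht0 : (0 : ℝ) < t := by exact_mod_cast (by omega : 0 < t)
  have hν0 : (0 : ℝ) < ν := by exact_mod_cast hν
  have hN1 : (1 : ℝ) ≤ N := by exact_mod_cast hN
  set G : ZMod t × ZMod t → ℂ → ℂ := fun x =>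
    jvF φ ((x.1.valMinAbs : ℝ) / t) ((x.2.valMinAbs : ℝ) / t) with hG
  set S : Finset (ZMod t × ZMod t) := Finset.univ.erase 0 with hS
  have hcard : S.card = t * t - 1 := by
    rw [hS, Finset.card_erase_of_mem (Finset.mem_univ _), Finset.card_univ, Fintype.card_prod,
      ZMod.card]
  set o : ZMod t → ℝ := fun a =>
    ν * max (1 - 2 * (N : ℝ) * |((a.valMinAbs : ℤ) : ℝ) / t|) 0 with ho
  have hbd : ∀ x : ZMod t × ZMod t, ∃ C : ℝ, 0 ≤ C ∧ ∀ τ : ℂ, 1 ≤ τ.im →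
      ‖G x τ‖ ≤ C * Real.exp (-(2 * Real.pi * o x.1) * τ.im) := by
    intro x
    refine jvF_bound φ _ _ _ fun n r hnr => ?_
    have h1 : ν ≤ n := by
      by_contra hcon
      exact hnr (horder n r (by omega))
    have h2 : r ^ 2 ≤ 4 * ((N * ν : ℕ) : ℤ) * n := by
      by_contra hcon
      exact hnr (φ.support n r (by omega))
    have h3 : (r : ℝ) ^ 2 ≤ 4 * ((N : ℝ) * ν) * n := by
      have : ((r ^ 2 : ℤ) : ℝ) ≤ ((4 * ((N * ν : ℕ) : ℤ) * n : ℤ) : ℝ) := by exact_mod_cast h2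
      push_cast at this
      exact this
    have h4 : |((x.1.valMinAbs : ℤ) : ℝ) / t| ≤ 1 / 2 := by
      rw [abs_div, abs_of_pos ht0, div_le_iff₀ ht0]
      have := ZMod.valMinAbs_mem_Ioc x.1
      have ha : |x.1.valMinAbs| * 2 ≤ (t : ℤ) := by
        have h5 := this.1
        have h6 := this.2
        rcases abs_cases x.1.valMinAbs with h | h <;> omega
      have hb : |(x.1.valMinAbs : ℝ)| * 2 ≤ t := by exact_mod_cast ha
      linarith
    have := jv_order hN1 hν0 (by exact_mod_cast h1 : (ν : ℝ) ≤ n) h3 h4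
    rw [ho]
    simp only
    rw [mul_max_of_nonneg _ _ hν0.le, mul_zero]
    push_cast
    exact this
  choose C hC0 hC using hbd
  have hzero : ∀ τ : ℂ, 0 < τ.im → ∏ x ∈ S, G x τ = 0 := by
    refine jv_valence (fun τ => ∏ x ∈ S, G x τ) (k * S.card) (∏ x ∈ S, C x)
      (∑ x ∈ S, o x.1) ?_ ?_ ?_ ?_
    · exact DifferentiableOn.fun_finsetProd fun x _ => jvF_differentiableOn φ _ _
    · intro γ τ hτ
      have hdet : ((γ.1 0 0 : ℤ) : ZMod t) * (γ.1 1 1 : ℤ) - (γ.1 0 1 : ℤ) * (γ.1 1 0 : ℤ) = 1 := by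
        have := γ.2
        rw [Matrix.det_fin_two] at this
        exact_mod_cast congrArg (fun z : ℤ => (z : ZMod t)) this
      simp only [norm_prod]
      have hstep : ∀ x : ZMod t × ZMod t,
          ‖G x ((γ.1 0 0 * τ + γ.1 0 1) / (γ.1 1 0 * τ + γ.1 1 1))‖ =
          ‖(γ.1 1 0 * τ + γ.1 1 1 : ℂ)‖ ^ k *
            ‖G (x.1 * (γ.1 0 0 : ℤ) + x.2 * (γ.1 1 0 : ℤ),
              x.1 * (γ.1 0 1 : ℤ) + x.2 * (γ.1 1 1 : ℤ)) τ‖ := by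
        intro x
        simp only [hG]
        rw [jvF_modular φ _ _ γ τ hτ, norm_mul, norm_pow]
        congr 1
        have := jvF_congr φ t (x.1.valMinAbs * γ.1 0 0 + x.2.valMinAbs * γ.1 1 0)
          (x.1.valMinAbs * γ.1 0 1 + x.2.valMinAbs * γ.1 1 1)
          (x.1 * (γ.1 0 0 : ℤ) + x.2 * (γ.1 1 0 : ℤ)).valMinAbs
          (x.1 * (γ.1 0 1 : ℤ) + x.2 * (γ.1 1 1 : ℤ)).valMinAbs (by simp) (by simp) τ hτ
        rw [← this]
        congr 2
        · push_cast; ring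
        · push_cast; ring
      rw [Finset.prod_congr rfl fun x _ => hstep x, Finset.prod_mul_distrib, Finset.prod_const,
        ← pow_mul]
      congr 1
      refine Finset.prod_nbij' (fun x => (x.1 * (γ.1 0 0 : ℤ) + x.2 * (γ.1 1 0 : ℤ),
              x.1 * (γ.1 0 1 : ℤ) + x.2 * (γ.1 1 1 : ℤ)))
        (fun y => (y.1 * (γ.1 1 1 : ℤ) - y.2 * (γ.1 1 0 : ℤ),
              -y.1 * (γ.1 0 1 : ℤ) + y.2 * (γ.1 0 0 : ℤ))) ?_ ?_ ?_ ?_ ?_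
      · intro x hx
        simp only [hS, Finset.mem_erase, Finset.mem_univ, and_true] at hx ⊢
        intro h0
        apply hx
        have h1 := congrArg Prod.fst h0
        have h2 := congrArg Prod.snd h0
        simp only [Prod.fst_zero, Prod.snd_zero] at h1 h2
        ext
        · simp only [Prod.fst_zero]
          linear_combination (-x.1) * hdet + ((γ.1 1 1 : ℤ) : ZMod t) * h1
            - ((γ.1 1 0 : ℤ) : ZMod t) * h2
        · simp only [Prod.snd_zero]
          linear_combination (-x.2) * hdet - ((γ.1 0 1 : ℤ) : ZMod t) * h1
            + ((γ.1 0 0 : ℤ) : ZMod t) * h2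
      · intro x hx
        simp only [hS, Finset.mem_erase, Finset.mem_univ, and_true] at hx ⊢
        intro h0
        apply hx
        have h1 := congrArg Prod.fst h0
        have h2 := congrArg Prod.snd h0
        simp only [Prod.fst_zero, Prod.snd_zero] at h1 h2
        ext
        · simp only [Prod.fst_zero]
          linear_combination (-x.1) * hdet + ((γ.1 0 0 : ℤ) : ZMod t) * h1
            + ((γ.1 1 0 : ℤ) : ZMod t) * h2
        · simp only [Prod.snd_zero]
          linear_combination (-x.2) * hdet + ((γ.1 0 1 : ℤ) : ZMod t) * h1
            + ((γ.1 1 1 : ℤ) : ZMod t) * h2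
      · intro x _
        ext
        · simp only
          linear_combination x.1 * hdet
        · simp only
          linear_combination x.2 * hdet
      · intro x _
        ext
        · simp only
          linear_combination x.1 * hdet
        · simp only
          linear_combination x.2 * hdet
      · intro x _
        rfl
    · intro τ hτ
      simp only [norm_prod]
      calc ∏ x ∈ S, ‖G x τ‖ ≤ ∏ x ∈ S, (C x * Real.exp (-(2 * Real.pi * o x.1) * τ.im)) :=
            Finset.prod_le_prod (fun _ _ => norm_nonneg _) fun x _ => hC x τ hτ
        _ = _ := by
            rw [Finset.prod_mul_distrib, ← Real.exp_sum]
            congr 2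
            rw [Finset.mul_sum, ← Finset.sum_neg_distrib, Finset.sum_mul]
    · have h1 : ∑ x ∈ S, o x.1 = (t : ℝ) * ∑ a : ZMod t, o a - ν := by
        have e1 : o (0 : ZMod t × ZMod t).1 = ν := by simp [ho]
        have e2 := Finset.add_sum_erase Finset.univ (fun x : ZMod t × ZMod t => o x.1)
          (Finset.mem_univ 0)
        have e3 : ∑ x : ZMod t × ZMod t, o x.1 = (t : ℝ) * ∑ a : ZMod t, o a := by
          rw [Fintype.sum_prod_type, Finset.mul_sum]
          simp [ZMod.card]
        simp only [e1] at e2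
        linarith
      have h2 : (ν : ℝ) * (t / (2 * N)) ≤ ∑ a : ZMod t, o a := by
        rw [ho]
        simp only
        rw [← Finset.mul_sum]
        exact mul_le_mul_of_nonneg_left (jv_sum_order t N hN ht3 hodd) hν0.le
      have h3 : (t : ℝ) * ((ν : ℝ) * (t / (2 * N))) ≤ (t : ℝ) * ∑ a : ZMod t, o a :=
        mul_le_mul_of_nonneg_left h2 ht0.le
      have h4 : ((S.card : ℕ) : ℝ) = t * t - 1 := by
        rw [hcard, Nat.cast_sub (by nlinarith)]
        push_cast; ring
      have h5 : (N : ℝ) * k + 1 ≤ 6 * ν := by exact_mod_cast hbig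
      have h6 : 12 * (N : ℝ) * ν < t ^ 2 := by exact_mod_cast htbig
      rw [h1]
      push_cast
      rw [h4]
      have h7 : (k : ℝ) * (t * t - 1) < 12 * ((t : ℝ) * ((ν : ℝ) * (t / (2 * N))) - ν) := by
        have e : 12 * ((t : ℝ) * ((ν : ℝ) * (t / (2 * N))) - ν) =
            (6 * ν * t ^ 2 - 12 * N * ν) / N := by
          field_simp
          ring
        rw [e, lt_div_iff₀ (by linarith)]
        have h8 : ((N : ℝ) * k + 1) * t ^ 2 ≤ 6 * ν * t ^ 2 :=
          mul_le_mul_of_nonneg_right h5 (by positivity)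
        have h9 : (0 : ℝ) ≤ N * k := by positivity
        nlinarith
      linarith
  obtain ⟨x, hxS, hx⟩ := jv_prod_zero S G {τ : ℂ | 0 < τ.im}
    (isOpen_lt continuous_const Complex.continuous_im)
    (Convex.isPreconnected (convex_halfSpace_im_gt 0)) ⟨I, by simp⟩
    (fun x => jvF_differentiableOn φ _ _) hzero
  have hx0 : ¬ (x.1 = 0 ∧ x.2 = 0) := by
    rintro ⟨h1, h2⟩
    exact (Finset.mem_erase.1 hxS).1 (Prod.ext h1 h2)
  set p := x.1.valMinAbs with hp
  set q := x.2.valMinAbs with hq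
  have hgpos : 0 < Int.gcd p q := by
    rw [Int.gcd_pos_iff]
    by_contra hcon
    push Not at hcon
    exact hx0 ⟨(ZMod.valMinAbs_eq_zero _).1 hcon.1, (ZMod.valMinAbs_eq_zero _).1 hcon.2⟩
  have hglt : Int.gcd p q < t := by
    have b1 : p.natAbs ≤ t / 2 := ZMod.natAbs_valMinAbs_le x.1
    have b2 : q.natAbs ≤ t / 2 := ZMod.natAbs_valMinAbs_le x.2
    by_cases hp0 : p = 0
    · have hq0 : q ≠ 0 := by
        rintro hq0
        simp [hp0, hq0] at hgpos
      have : Int.gcd p q ≤ q.natAbs :=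
        Nat.le_of_dvd (Int.natAbs_pos.2 hq0) (Nat.gcd_dvd_right _ _)
      omega
    · have : Int.gcd p q ≤ p.natAbs :=
        Nat.le_of_dvd (Int.natAbs_pos.2 hp0) (Nat.gcd_dvd_left _ _)
      omega
  refine ⟨Int.gcd p q, hgpos, hglt, ?_⟩
  set g : ℕ := Int.gcd p q with hg
  obtain ⟨p', hp'⟩ : (g : ℤ) ∣ p := Int.gcd_dvd_left _ _
  obtain ⟨q', hq'⟩ : (g : ℤ) ∣ q := Int.gcd_dvd_right _ _
  have hcop : IsCoprime p' q' := by
    rw [Int.isCoprime_iff_gcd_eq_one]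
    have h1 : Int.gcd ((g : ℤ) * p') ((g : ℤ) * q') = g * Int.gcd p' q' := by
      rw [Int.gcd_mul_left]; simp
    rw [← hp', ← hq', ← hg] at h1
    exact Nat.eq_of_mul_eq_mul_left hgpos (by omega)
  obtain ⟨γ, -, hγ⟩ := ModularGroup.bottom_row_surj (R := ℤ)
    (show (![p', q'] : Fin 2 → ℤ) ∈ {cd : Fin 2 → ℤ | IsCoprime (cd 0) (cd 1)} by simpa using hcop)
  have hγ0 : γ.1 1 0 = p' := by
    have := congrFun hγ 0
    simpa using this
  have hγ1 : γ.1 1 1 = q' := by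
    have := congrFun hγ 1
    simpa using this
  intro τ hτ
  set w : UpperHalfPlane := γ⁻¹ • ⟨τ, hτ⟩ with hw
  have hmod := jvF_modular φ 0 ((g : ℝ) / t) γ w w.2
  rw [← jv_coe_smul, hw, smul_inv_smul, ← hw, hγ0, hγ1] at hmod
  have e1 : (0 : ℝ) * (γ.1 0 0 : ℤ) + (g : ℝ) / t * (p' : ℤ) = (p : ℝ) / t := by
    rw [hp']; push_cast; ring
  have e2 : (0 : ℝ) * (γ.1 0 1 : ℤ) + (g : ℝ) / t * (q' : ℤ) = (q : ℝ) / t := by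
    rw [hq']; push_cast; ring
  rw [e1, e2] at hmod
  have hz : jvF φ ((p : ℝ) / t) ((q : ℝ) / t) w = 0 := hx w w.2
  rw [hz, mul_zero] at hmod
  unfold jvF at hmod
  simpa using hmod

theorem jacobi_vanishing_order (k N ν : ℕ) (hk : 0 < k) (hN : 0 < N) (hν : 0 < ν)
    (hbig : (N : ℚ) * k / 6 < (ν : ℚ))
    (φ : JacobiForm k (N * ν))
    (horder : ∀ (n : ℕ) (r : ℤ), n < ν → φ.coeff n r = 0) :
    (∀ (n : ℕ) (r : ℤ), φ.coeff n r = 0) ∧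
      ∀ τ z : ℂ, 0 < τ.im → φ.toFun τ z = 0 := by
  have hbig' : N * k < 6 * ν := by
    have : (N : ℚ) * k < 6 * ν := by linarith
    exact_mod_cast this
  have hvan : ∀ τ z : ℂ, 0 < τ.im → φ.toFun τ z = 0 := by
    intro τ z hτ
    have htor : ∀ t : ℕ, ∃ g : ℕ, t.Prime → 12 * N * ν + 3 ≤ t → 1 ≤ g ∧ g < t ∧
        φ.toFun τ (((g : ℝ) / t : ℝ) : ℂ) = 0 := by
      intro t
      by_cases ht : t.Prime ∧ 12 * N * ν + 3 ≤ t
      · obtain ⟨g, h1, h2, h3⟩ := jv_torsion k N ν hN hν hbig' φ horder t (by omega)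
          (ht.1.odd_of_ne_two (by omega)) (by nlinarith [ht.2])
        exact ⟨g, fun _ _ => ⟨h1, h2, h3 τ hτ⟩⟩
      · exact ⟨0, fun h1 h2 => absurd ⟨h1, h2⟩ ht⟩
    choose g hg using htor
    set T : Set ℕ := {t | t.Prime ∧ 12 * N * ν + 3 ≤ t} with hT
    have hTinf : T.Infinite := by
      rw [Set.infinite_iff_exists_gt]
      intro a
      obtain ⟨b, hb, hbp⟩ := Nat.exists_infinite_primes (a + 1 + (12 * N * ν + 3))
      exact ⟨b, ⟨hbp, by omega⟩, by omega⟩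
    set Z : Set ℂ := {w | φ.toFun τ w = 0 ∧ w ∈ Metric.closedBall (0 : ℂ) 1} with hZ
    have hZinf : Z.Infinite := by
      refine Set.infinite_of_injOn_mapsTo (f := fun t : ℕ => (((g t : ℝ) / t : ℝ) : ℂ))
        (s := T) ?_ ?_ hTinf
      · intro s hs t ht hst
        obtain ⟨a1, a2, -⟩ := hg s hs.1 hs.2
        obtain ⟨b1, b2, -⟩ := hg t ht.1 ht.2
        have hst' : (g s : ℝ) / s = (g t : ℝ) / t := Complex.ofReal_injective hst
        have hs0 : (s : ℝ) ≠ 0 := by exact_mod_cast hs.1.ne_zero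
        have ht0 : (t : ℝ) ≠ 0 := by exact_mod_cast ht.1.ne_zero
        rw [div_eq_div_iff hs0 ht0] at hst'
        have hn : g s * t = g t * s := by exact_mod_cast hst'
        have hdvd : s ∣ g s * t := ⟨g t, by rw [hn]; ring⟩
        rcases (hs.1.dvd_mul).1 hdvd with h | h
        · exact absurd (Nat.le_of_dvd (by omega) h) (by omega)
        · exact (Nat.prime_dvd_prime_iff_eq hs.1 ht.1).1 h
      · intro t ht
        obtain ⟨b1, b2, b3⟩ := hg t ht.1 ht.2
        refine ⟨b3, ?_⟩
        have ht0 : (0 : ℝ) < t := by exact_mod_cast ht.1.pos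
        rw [mem_closedBall_zero_iff, Complex.norm_real, Real.norm_of_nonneg (by positivity),
          div_le_one ht0]
        exact_mod_cast b2.le
    obtain ⟨w, -, hw⟩ := hZinf.exists_accPt_of_subset_isCompact
      (isCompact_closedBall (0 : ℂ) 1) fun x hx => hx.2
    have hd : DifferentiableOn ℂ (φ.toFun τ) Set.univ := fun x _ =>
      (jv_differentiableAt φ (fun _ => τ) (fun w => w) (by fun_prop) (by fun_prop) x
        hτ).differentiableWithinAt
    have hfreq : ∃ᶠ x in nhdsWithin w {w}ᶜ, φ.toFun τ x = 0 := by
      have := accPt_iff_frequently_nhdsNE.1 hw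
      exact this.mono fun x hx => hx.1
    exact (hd.analyticOnNhd isOpen_univ).eqOn_zero_of_preconnected_of_frequently_eq_zero
      isPreconnected_univ (Set.mem_univ w) hfreq (Set.mem_univ z)
  exact ⟨fun n r => jv_coeff_zero φ hvan n r, hvan⟩
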